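/- For every integer n ≥ 1, the 2-dimensional substitution ω_n is primitive: there exists m ∈ ℕ such that for all tiles a, b ∈ T_n, the tile b occurs in the pattern ω_n^m(a). -/

import Mathlib

structure WangTile (C : Type*) where
  right : C
  top : C
  left : C
  bottom : C
deriving DecidableEq

abbrev Lbl : Type := ℤ × ℤ × ℤ

def Vn (n : ℤ) : Set Lbl :=
  {v | 0 ≤ v.1 ∧ v.1 ≤ v.2.1 ∧ v.2.1 ≤ 1 ∧ v.2.1 ≤ v.2.2 ∧ v.2.2 ≤ n + 1}

def hatT {C : Type*} (t : WangTile C) : WangTile C :=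
  ⟨t.top, t.right, t.bottom, t.left⟩

def whiteTiles (n : ℤ) : Set (WangTile Lbl) :=
  {t | ∃ i j : ℤ, 1 ≤ i ∧ i ≤ n ∧ 1 ≤ j ∧ j ≤ n ∧
    t = ⟨(1, 1, i + 1), (1, 1, j + 1), (1, 1, i), (1, 1, j)⟩}

def blueH (n : ℤ) : Set (WangTile Lbl) :=
  {t | ∃ i : ℤ, 0 ≤ i ∧ i ≤ n ∧ t = ⟨(0, 0, i + 1), (1, 1, 1), (0, 0, i), (1, 1, n)⟩}

def greenH (n : ℤ) : Set (WangTile Lbl) :=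
  {t | ∃ i : ℤ, 0 ≤ i ∧ i ≤ n ∧ t = ⟨(0, 1, i + 1), (1, 1, 1), (0, 0, i), (1, 1, n + 1)⟩}

def yellowH (n : ℤ) : Set (WangTile Lbl) :=
  {t | ∃ i : ℤ, 1 ≤ i ∧ i ≤ n ∧ t = ⟨(0, 1, i + 1), (1, 1, 2), (0, 1, i), (1, 1, n + 1)⟩}

def antiH (n : ℤ) : Set (WangTile Lbl) :=
  {t | ∃ i : ℤ, 1 ≤ i ∧ i ≤ n ∧ t = ⟨(0, 0, i + 1), (1, 1, 2), (0, 1, i), (1, 1, n)⟩}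

def junctionTile (n k l r s : ℤ) : WangTile Lbl :=
  ⟨(0, k, l), (0, r, s), (0, s, r + n), (0, l, k + n)⟩

def jPairs : Set (ℤ × ℤ) := {(0, 0), (0, 1), (1, 1)}

def junctions (n : ℤ) : Set (WangTile Lbl) :=
  {t | ∃ k l r s : ℤ, (k, l) ∈ jPairs ∧ (r, s) ∈ jPairs ∧ t = junctionTile n k l r s}

def Text (n : ℤ) : Set (WangTile Lbl) :=
  whiteTiles n ∪ blueH n ∪ greenH n ∪ yellowH n ∪ antiH n ∪
    hatT '' blueH n ∪ hatT '' greenH n ∪ hatT '' yellowH n ∪ hatT '' antiH n ∪ junctions n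

def Dset (n : ℤ) : Set (WangTile Lbl) :=
  {(⟨(0, 0, n + 1), (1, 1, 1), (0, 0, n), (1, 1, n)⟩ : WangTile Lbl),
    hatT (⟨(0, 0, n + 1), (1, 1, 1), (0, 0, n), (1, 1, n)⟩ : WangTile Lbl),
    junctionTile n 0 0 1 1, junctionTile n 1 1 0 0}

def Tmet (n : ℤ) : Set (WangTile Lbl) :=
  Text n \ (antiH n ∪ hatT '' antiH n ∪ Dset n)

def ValidConfig {C : Type*} (T : Set (WangTile C)) (x : ℤ × ℤ → WangTile C) : Prop :=
  (∀ m, x m ∈ T) ∧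
    (∀ m : ℤ × ℤ, (x m).right = (x (m.1 + 1, m.2)).left) ∧
    (∀ m : ℤ × ℤ, (x m).top = (x (m.1, m.2 + 1)).bottom)

def ValidPattern {C : Type*} (T : Set (WangTile C)) (w h : ℕ) (p : ℕ → ℕ → WangTile C) : Prop :=
  (∀ i j, i < w → j < h → p i j ∈ T) ∧
    (∀ i j, i + 1 < w → j < h → (p i j).right = (p (i + 1) j).left) ∧
    (∀ i j, i < w → j + 1 < h → (p i j).top = (p i (j + 1)).bottom)

def bottomWord {C : Type*} (w : ℕ) (p : ℕ → ℕ → WangTile C) : List C :=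
  (List.range w).map fun i => (p i 0).bottom

def topWord {C : Type*} (w h : ℕ) (p : ℕ → ℕ → WangTile C) : List C :=
  (List.range w).map fun i => (p i (h - 1)).top

def leftWord {C : Type*} (h : ℕ) (p : ℕ → ℕ → WangTile C) : List C :=
  (List.range h).map fun j => (p 0 j).left

def rightWord {C : Type*} (w h : ℕ) (p : ℕ → ℕ → WangTile C) : List C :=
  (List.range h).map fun j => (p (w - 1) j).right

def tau (n : ℤ) (v : Lbl) : List Lbl :=
  if v.1 = v.2.2 then
    (0, v.1 - v.2.1 + 1, n + 1) :: List.replicate (n - v.2.2).toNat (1, 1, n + 1)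
  else
    (0, v.1 - v.2.1 + 1, n) ::
      (List.replicate (v.2.2 - v.1 - 1).toNat (1, 1, n) ++
        List.replicate (n + 1 - v.2.2).toNat (1, 1, n + 1))

/-- `q` (of size `w' × h'`) is the image under `ω_n` of the pattern `p` (of size `w × h`)
over the tile set `T`: there are block boundaries `A`, `B` such that each block of `q`
is the unique valid rectangular pattern over `T` whose boundary words are the images
under `τ_n` of the labels of the corresponding tile of `p`. -/
def IsPatternImage (n : ℤ) (T : Set (WangTile Lbl)) (w h : ℕ)
    (p : ℕ → ℕ → WangTile Lbl) (w' h' : ℕ) (q : ℕ → ℕ → WangTile Lbl) : Prop :=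
  ∃ A B : ℕ → ℕ, A 0 = 0 ∧ B 0 = 0 ∧ A w = w' ∧ B h = h' ∧
    (∀ k, k < w → A k < A (k + 1)) ∧ (∀ k, k < h → B k < B (k + 1)) ∧
    ∀ l1 l2, l1 < w → l2 < h →
      ValidPattern T (A (l1 + 1) - A l1) (B (l2 + 1) - B l2)
        (fun i j => q (A l1 + i) (B l2 + j)) ∧
      rightWord (A (l1 + 1) - A l1) (B (l2 + 1) - B l2)
        (fun i j => q (A l1 + i) (B l2 + j)) = tau n (p l1 l2).right ∧
      topWord (A (l1 + 1) - A l1) (B (l2 + 1) - B l2)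
        (fun i j => q (A l1 + i) (B l2 + j)) = tau n (p l1 l2).top ∧
      leftWord (B (l2 + 1) - B l2) (fun i j => q (A l1 + i) (B l2 + j)) =
        tau n (p l1 l2).left ∧
      bottomWord (A (l1 + 1) - A l1) (fun i j => q (A l1 + i) (B l2 + j)) =
        tau n (p l1 l2).bottom

/-- `IterImage n T m a w h q` : `q` (of size `w × h`) is the pattern `ω_n^m(a)`. -/
def IterImage (n : ℤ) (T : Set (WangTile Lbl)) :
    ℕ → WangTile Lbl → ℕ → ℕ → (ℕ → ℕ → WangTile Lbl) → Prop
  | 0, a, w, h, q => w = 1 ∧ h = 1 ∧ q 0 0 = a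
  | m + 1, a, w, h, q =>
      ∃ (w' h' : ℕ) (p : ℕ → ℕ → WangTile Lbl),
        IterImage n T m a w' h' p ∧ IsPatternImage n T w' h' p w h q

/-- The blue, green and yellow horizontal tiles of the metallic mean tile set. -/
def HorizontalTile (n : ℤ) (t : WangTile Lbl) : Prop :=
  ∃ i : ℤ,
    (0 ≤ i ∧ i < n ∧ t = ⟨(0, 0, i + 1), (1, 1, 1), (0, 0, i), (1, 1, n)⟩) ∨
    (0 ≤ i ∧ i ≤ n ∧ t = ⟨(0, 1, i + 1), (1, 1, 1), (0, 0, i), (1, 1, n + 1)⟩) ∨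
    (1 ≤ i ∧ i ≤ n ∧ t = ⟨(0, 1, i + 1), (1, 1, 2), (0, 1, i), (1, 1, n + 1)⟩)

/-- The junction tiles of the metallic mean tile set. -/
def MetallicJunction (n : ℤ) (t : WangTile Lbl) : Prop :=
  ∃ k l r s : ℤ, 0 ≤ k ∧ k ≤ l ∧ l ≤ 1 ∧ 0 ≤ r ∧ r ≤ s ∧ s ≤ 1 ∧
    ¬(l = 0 ∧ r = 1) ∧ ¬(k = 1 ∧ s = 0) ∧ t = junctionTile n k l r s

theorem mem_jPairs {k l : ℤ} : (k, l) ∈ jPairs ↔ 0 ≤ k ∧ k ≤ l ∧ l ≤ 1 := by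
  simp only [jPairs, Set.mem_insert_iff, Set.mem_singleton_iff, Prod.mk.injEq]
  omega

theorem hatT_injective {C : Type*} : Function.Injective (hatT (C := C)) := by
  rintro ⟨a, b, c, d⟩ ⟨a', b', c', d'⟩ h
  simp only [hatT, WangTile.mk.injEq] at h ⊢
  tauto

theorem mem_hatT_image {C : Type*} {S : Set (WangTile C)} {t : WangTile C} :
    t ∈ hatT '' S ↔ hatT t ∈ S := by
  constructor
  · rintro ⟨u, hu, rfl⟩
    exact hu
  · intro h
    exact ⟨hatT t, h, rfl⟩


theorem mem_Tmet_iff {n : ℤ} (hn : 1 ≤ n) {t : WangTile Lbl} :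
    t ∈ Tmet n ↔ t ∈ whiteTiles n ∨ HorizontalTile n t ∨ HorizontalTile n (hatT t) ∨
      MetallicJunction n t := by
  simp only [Tmet, Text, Set.mem_sdiff, Set.mem_union, mem_hatT_image]
  constructor
  · rintro ⟨h, h'⟩
    simp only [not_or] at h'
    obtain ⟨⟨ha, ha'⟩, hD⟩ := h'
    rcases h with ((((((((h | h) | h) | h) | h) | h) | h) | h) | h) | h
    · exact Or.inl h
    · obtain ⟨i, h1, h2, rfl⟩ := h
      refine Or.inr (Or.inl ⟨i, Or.inl ⟨h1, lt_of_le_of_ne h2 ?_, rfl⟩⟩)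
      rintro rfl
      exact hD (Or.inl rfl)
    · obtain ⟨i, h⟩ := h
      exact Or.inr (Or.inl ⟨i, Or.inr (Or.inl h)⟩)
    · obtain ⟨i, h⟩ := h
      exact Or.inr (Or.inl ⟨i, Or.inr (Or.inr h)⟩)
    · exact absurd h ha
    · obtain ⟨i, h1, h2, h3⟩ := h
      refine Or.inr (Or.inr (Or.inl ⟨i, Or.inl ⟨h1, lt_of_le_of_ne h2 ?_, h3⟩⟩))
      rintro rfl
      exact hD (Or.inr (Or.inl (hatT_injective h3)))
    · obtain ⟨i, h⟩ := h
      exact Or.inr (Or.inr (Or.inl ⟨i, Or.inr (Or.inl h)⟩))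
    · obtain ⟨i, h⟩ := h
      exact Or.inr (Or.inr (Or.inl ⟨i, Or.inr (Or.inr h)⟩))
    · exact absurd h ha'
    · obtain ⟨k, l, r, s, hkl, hrs, rfl⟩ := h
      obtain ⟨h1, h2, h3⟩ := mem_jPairs.1 hkl
      obtain ⟨h4, h5, h6⟩ := mem_jPairs.1 hrs
      refine Or.inr (Or.inr (Or.inr ⟨k, l, r, s, h1, h2, h3, h4, h5, h6, ?_, ?_, rfl⟩))
      · rintro ⟨rfl, rfl⟩
        obtain rfl : k = 0 := by omega
        obtain rfl : s = 1 := by omega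
        exact hD (Or.inr (Or.inr (Or.inl rfl)))
      · rintro ⟨rfl, rfl⟩
        obtain rfl : l = 1 := by omega
        obtain rfl : r = 0 := by omega
        exact hD (Or.inr (Or.inr (Or.inr rfl)))
  · intro h
    constructor
    · rcases h with h | ⟨i, h | h | h⟩ | ⟨i, h | h | h⟩ |
          ⟨k, l, r, s, h1, h2, h3, h4, h5, h6, -, -, h⟩
      · tauto
      · have : t ∈ blueH n := ⟨i, h.1, h.2.1.le, h.2.2⟩
        tauto
      · have : t ∈ greenH n := ⟨i, h⟩
        tauto
      · have : t ∈ yellowH n := ⟨i, h⟩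
        tauto
      · have : hatT t ∈ blueH n := ⟨i, h.1, h.2.1.le, h.2.2⟩
        tauto
      · have : hatT t ∈ greenH n := ⟨i, h⟩
        tauto
      · have : hatT t ∈ yellowH n := ⟨i, h⟩
        tauto
      · exact Or.inr ⟨k, l, r, s, mem_jPairs.2 ⟨h1, h2, h3⟩, mem_jPairs.2 ⟨h4, h5, h6⟩, h⟩
    · obtain ⟨⟨r1, r2, r3⟩, ⟨t1, t2, t3⟩, ⟨l1, l2, l3⟩, ⟨b1, b2, b3⟩⟩ := t
      simp only [antiH, Dset, Set.mem_insert_iff, Set.mem_singleton_iff]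
      simp only [whiteTiles, HorizontalTile, MetallicJunction, junctionTile, hatT,
        Set.mem_ofPred_eq, WangTile.mk.injEq, Prod.mk.injEq] at h ⊢
      rintro ((⟨i', h'⟩ | ⟨i', h'⟩) | h' | h' | h' | h') <;>
      rcases h with ⟨i, j, h⟩ | ⟨i, h | h | h⟩ | ⟨i, h | h | h⟩ | ⟨k, l, r, s, h⟩ <;> omega

theorem hatT_mem_Tmet {n : ℤ} (hn : 1 ≤ n) {t : WangTile Lbl} (h : t ∈ Tmet n) :
    hatT t ∈ Tmet n := by
  rw [mem_Tmet_iff hn] at h ⊢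
  rcases h with ⟨i, j, hi, hi', hj, hj', rfl⟩ | h | h |
    ⟨k, l, r, s, h1, h2, h3, h4, h5, h6, h7, h8, rfl⟩
  · exact Or.inl ⟨j, i, hj, hj', hi, hi', rfl⟩
  · exact Or.inr (Or.inr (Or.inl h))
  · exact Or.inr (Or.inl h)
  · exact Or.inr (Or.inr (Or.inr ⟨r, s, k, l, h4, h5, h6, h1, h2, h3, by omega, by omega, rfl⟩))

/-- The letter of index `i` of the word `τ_n(v)`. -/
def tauLetter (n : ℤ) (v : Lbl) (i : ℕ) : Lbl :=
  if i = 0 then (0, v.1 - v.2.1 + 1, if v.1 = v.2.2 then n + 1 else n)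
  else (1, 1, if v.2.2 - v.1 ≤ i then n + 1 else n)

/-- The length of the word `τ_n(v)`. -/
def tauLength (n : ℤ) (v : Lbl) : ℕ :=
  (n + 1 - v.1).toNat

theorem tau_eq_map {n : ℤ} (hn : 1 ≤ n) {v : Lbl} (hv : v ∈ Vn n) :
    tau n v = (List.range (tauLength n v)).map (tauLetter n v) := by
  obtain ⟨x, y, z⟩ := v
  simp only [Vn, Set.mem_ofPred_eq] at hv
  apply List.ext_getElem
  · simp only [tau, tauLength]
    split_ifs <;> simp <;> omega
  · intro i h1 h2
    simp only [tau, tauLength, tauLetter, List.getElem_map, List.getElem_range]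
    rcases i with _ | i
    · split_ifs <;> simp_all
    · split_ifs <;>
        simp only [List.getElem_cons_succ, List.getElem_append, List.getElem_replicate] <;>
        (try split_ifs) <;> simp_all <;> omega

/-- The label of the horizontal edge at abscissa `i` and height `j` in the image of a tile with
left label `l` and bottom label `b`. -/
def blockEdge (n : ℤ) (l b : Lbl) (i j : ℕ) : Lbl :=
  if j = 0 then tauLetter n b i
  else if i = 0 then (0, if l.2.2 - l.1 < j then 1 else 0, l.1 - l.2.1 + j)
  else (1, 1, j + if b.2.2 - b.1 < i then 1 else 0)

/-- The image of the tile `t` under the substitution `ω_n`. -/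
def block (n : ℤ) (t : WangTile Lbl) (i j : ℕ) : WangTile Lbl :=
  ⟨blockEdge n t.bottom t.left j (i + 1), blockEdge n t.left t.bottom i (j + 1),
    blockEdge n t.bottom t.left j i, blockEdge n t.left t.bottom i j⟩

/-- The conditions on the left, bottom and top labels of a tile which ensure that its block is
a valid pattern with the expected top boundary word. -/
structure Substitutable (n : ℤ) (l b u : Lbl) : Prop where
  bottom_mem : b ∈ Vn n
  top_mem : u ∈ Vn n
  bottom_le : b.2.1 = 0 → b.2.2 ≤ n
  corner : b.2.1 = b.1 + 1 → l.1 < l.2.2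
  left_ge : b.1 = 0 → n ≤ l.2.2
  fst_eq : u.1 = b.1
  top_eq : ∀ i < tauLength n b, blockEdge n l b i (tauLength n l) = tauLetter n u i

theorem Substitutable.of_mem_Tmet {n : ℤ} (hn : 1 ≤ n) {t : WangTile Lbl} (h : t ∈ Tmet n) :
    Substitutable n t.left t.bottom t.top := by
  rw [mem_Tmet_iff hn] at h
  obtain ⟨⟨r1, r2, r3⟩, ⟨t1, t2, t3⟩, ⟨l1, l2, l3⟩, ⟨b1, b2, b3⟩⟩ := t
  simp only [whiteTiles, HorizontalTile, MetallicJunction, junctionTile, hatT, Set.mem_ofPred_eq,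
    WangTile.mk.injEq, Prod.mk.injEq] at h
  constructor
  all_goals simp only [Vn, Set.mem_ofPred_eq, tauLength, tauLetter, blockEdge]
  case top_eq =>
    intro i hi
    rcases h with ⟨i, j, h⟩ | ⟨i, h | h | h⟩ | ⟨i, h | h | h⟩ | ⟨k, l, r, s, h⟩ <;>
    (split_ifs <;> refine Prod.ext ?_ (Prod.ext ?_ ?_) <;> dsimp only <;> (try split_ifs) <;>
        omega)
  all_goals
    rcases h with ⟨i, j, h⟩ | ⟨i, h | h | h⟩ | ⟨i, h | h | h⟩ | ⟨k, l, r, s, h⟩ <;> omega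

section Block

variable {n : ℤ} {t : WangTile Lbl}

theorem horizontalTile_block (hn : 1 ≤ n) (h : t ∈ Tmet n) {i : ℕ} (hi0 : 0 < i)
    (hi : i < tauLength n t.bottom) : HorizontalTile n (block n t i 0) := by
  have h1 := Substitutable.of_mem_Tmet hn h
  obtain ⟨_, _, ⟨l1, l2, l3⟩, ⟨b1, b2, b3⟩⟩ := t
  have a1 := h1.bottom_mem
  have a2 := h1.bottom_le
  clear h1 h
  simp only [Vn, Set.mem_ofPred_eq, tauLength] at *
  refine ⟨b1 - b2 + i, ?_⟩
  simp only [block, blockEdge, tauLetter, if_neg hi0.ne', if_true, zero_add, one_ne_zero,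
    if_false, Nat.add_eq_zero_iff, and_false, WangTile.mk.injEq, Prod.mk.injEq, true_and,
    and_true, Nat.cast_add, Nat.cast_one]
  rcases lt_trichotomy (i : ℤ) (b3 - b1) with hc | hc | hc
  · left
    refine ⟨by omega, by omega, ?_⟩
    split_ifs <;> omega
  · right; left
    refine ⟨by omega, by omega, ?_⟩
    split_ifs <;> omega
  · right; right
    refine ⟨by omega, by omega, ?_⟩
    split_ifs <;> omega

theorem metallicJunction_block (hn : 1 ≤ n) (h : t ∈ Tmet n) :
    MetallicJunction n (block n t 0 0) := by
  have h1 := Substitutable.of_mem_Tmet hn h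
  have h2 := Substitutable.of_mem_Tmet hn (hatT_mem_Tmet hn h)
  obtain ⟨_, _, ⟨l1, l2, l3⟩, ⟨b1, b2, b3⟩⟩ := t
  have a1 := h1.bottom_mem
  have a3 := h1.corner
  have c1 := h2.bottom_mem
  have c3 := h2.corner
  clear h1 h2 h
  simp only [Vn, hatT, Set.mem_ofPred_eq] at *
  refine ⟨if b1 = b3 then 1 else 0, b1 - b2 + 1, if l1 = l3 then 1 else 0, l1 - l2 + 1, ?_⟩
  simp only [block, blockEdge, tauLetter, junctionTile, if_true, zero_add, one_ne_zero,
    if_false, WangTile.mk.injEq, Prod.mk.injEq, true_and, and_true,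
    Nat.cast_one]
  split_ifs <;> omega

theorem block_mem_whiteTiles (hn : 1 ≤ n) (h : t ∈ Tmet n) {i j : ℕ} (hi0 : 0 < i) (hj0 : 0 < j)
    (hi : i < tauLength n t.bottom) (hj : j < tauLength n t.left) :
    block n t i j ∈ whiteTiles n := by
  have h1 := Substitutable.of_mem_Tmet hn h
  have h2 := Substitutable.of_mem_Tmet hn (hatT_mem_Tmet hn h)
  obtain ⟨_, _, ⟨l1, l2, l3⟩, ⟨b1, b2, b3⟩⟩ := t
  have a1 := h1.bottom_mem
  have a4 := h1.left_ge
  have c1 := h2.bottom_mem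
  have c4 := h2.left_ge
  clear h1 h2 h
  simp only [Vn, hatT, Set.mem_ofPred_eq, tauLength] at *
  refine ⟨i + if l3 - l1 < j then 1 else 0, j + if b3 - b1 < i then 1 else 0, ?_⟩
  simp only [block, blockEdge, if_neg hi0.ne', if_neg hj0.ne', Nat.add_eq_zero_iff, one_ne_zero,
    and_false, if_false, Nat.cast_add, Nat.cast_one]
  refine ⟨?_, ?_, ?_, ?_, ?_⟩
  · split_ifs <;> omega
  · split_ifs <;> omega
  · split_ifs <;> omega
  · split_ifs <;> omega
  · simp only [WangTile.mk.injEq, Prod.mk.injEq, true_and, and_true]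
    omega

theorem block_mem_Tmet (hn : 1 ≤ n) (h : t ∈ Tmet n) {i j : ℕ}
    (hi : i < tauLength n t.bottom) (hj : j < tauLength n t.left) : block n t i j ∈ Tmet n := by
  rw [mem_Tmet_iff hn]
  rcases Nat.eq_zero_or_pos i with rfl | hi0 <;> rcases Nat.eq_zero_or_pos j with rfl | hj0
  · exact Or.inr (Or.inr (Or.inr (metallicJunction_block hn h)))
  · exact Or.inr (Or.inr (Or.inl (horizontalTile_block hn (hatT_mem_Tmet hn h) hj0 hj)))
  · exact Or.inr (Or.inl (horizontalTile_block hn h hi0 hi))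
  · exact Or.inl (block_mem_whiteTiles hn h hi0 hj0 hi hj)

theorem block_top (hn : 1 ≤ n) (h : t ∈ Tmet n) {i : ℕ} (hi : i < tauLength n t.bottom) :
    (block n t i (tauLength n t.left - 1)).top = tauLetter n t.top i := by
  have h1 := Substitutable.of_mem_Tmet hn h
  rw [← h1.top_eq i hi]
  have := (Substitutable.of_mem_Tmet hn (hatT_mem_Tmet hn h)).bottom_mem
  simp only [Vn, hatT, Set.mem_ofPred_eq] at this
  simp only [block]
  rw [Nat.sub_add_cancel]
  simp only [tauLength]
  omega

theorem block_right (hn : 1 ≤ n) (h : t ∈ Tmet n) {j : ℕ} (hj : j < tauLength n t.left) :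
    (block n t (tauLength n t.bottom - 1) j).right = tauLetter n t.right j :=
  block_top hn (hatT_mem_Tmet hn h) hj

theorem block_bottom (i : ℕ) : (block n t i 0).bottom = tauLetter n t.bottom i := rfl

theorem block_left (j : ℕ) : (block n t 0 j).left = tauLetter n t.left j := rfl

theorem tauLength_pos {v : Lbl} (hn : 1 ≤ n) (hv : v ∈ Vn n) : 0 < tauLength n v := by
  simp only [Vn, Set.mem_ofPred_eq, tauLength] at *
  omega

theorem tauLength_top (hn : 1 ≤ n) (h : t ∈ Tmet n) :
    tauLength n t.top = tauLength n t.bottom := by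
  rw [tauLength, (Substitutable.of_mem_Tmet hn h).fst_eq, tauLength]

theorem tauLength_right (hn : 1 ≤ n) (h : t ∈ Tmet n) :
    tauLength n t.right = tauLength n t.left :=
  tauLength_top hn (hatT_mem_Tmet hn h)

theorem bottom_mem_Vn (hn : 1 ≤ n) (h : t ∈ Tmet n) : t.bottom ∈ Vn n :=
  (Substitutable.of_mem_Tmet hn h).bottom_mem

theorem top_mem_Vn (hn : 1 ≤ n) (h : t ∈ Tmet n) : t.top ∈ Vn n :=
  (Substitutable.of_mem_Tmet hn h).top_mem

theorem left_mem_Vn (hn : 1 ≤ n) (h : t ∈ Tmet n) : t.left ∈ Vn n :=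
  bottom_mem_Vn hn (hatT_mem_Tmet hn h)

theorem right_mem_Vn (hn : 1 ≤ n) (h : t ∈ Tmet n) : t.right ∈ Vn n :=
  top_mem_Vn hn (hatT_mem_Tmet hn h)

end Block

section Walk

/-- The tile `b` occurs in the image of the tile `a` under `ω_n`. -/
def ImageStep (n : ℤ) (a b : WangTile Lbl) : Prop :=
  ∃ i < tauLength n a.bottom, ∃ j < tauLength n a.left, block n a i j = b

/-- The tile `b` occurs in the image of the tile `a` under `ω_n ^ m`. -/
def ImageWalk (n : ℤ) : ℕ → WangTile Lbl → WangTile Lbl → Prop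
  | 0, a, b => a = b
  | m + 1, a, b => ∃ c, ImageWalk n m a c ∧ ImageStep n c b

variable {n : ℤ}

theorem ImageStep.hatT {a b : WangTile Lbl} (h : ImageStep n a b) :
    ImageStep n (hatT a) (hatT b) := by
  obtain ⟨i, hi, j, hj, rfl⟩ := h
  exact ⟨j, hj, i, hi, rfl⟩

theorem ImageWalk.hatT {m : ℕ} {a b : WangTile Lbl} (h : ImageWalk n m a b) :
    ImageWalk n m (hatT a) (hatT b) := by
  induction m generalizing b with
  | zero => exact congrArg _ h
  | succ m ih =>
    obtain ⟨c, h1, h2⟩ := h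
    exact ⟨_, ih h1, h2.hatT⟩

theorem ImageStep.walk {a b : WangTile Lbl} (h : ImageStep n a b) : ImageWalk n 1 a b :=
  ⟨a, rfl, h⟩

theorem ImageWalk.step {m : ℕ} {a b c : WangTile Lbl} (h : ImageWalk n m a b)
    (h' : ImageStep n b c) : ImageWalk n (m + 1) a c :=
  ⟨b, h, h'⟩

theorem ImageWalk.trans {m k : ℕ} {a b c : WangTile Lbl} (h : ImageWalk n m a b)
    (h' : ImageWalk n k b c) : ImageWalk n (m + k) a c := by
  induction k generalizing c with
  | zero => exact (show b = c from h') ▸ h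
  | succ k ih =>
    obtain ⟨d, h1, h2⟩ := h'
    exact ⟨d, ih h1, h2⟩

theorem imageStep_corner {a : WangTile Lbl} (hn : 1 ≤ n) (ha : a ∈ Tmet n) :
    ImageStep n a (block n a 0 0) :=
  ⟨0, tauLength_pos hn (bottom_mem_Vn hn ha), 0, tauLength_pos hn (left_mem_Vn hn ha), rfl⟩

theorem MetallicJunction.imageStep_white {t : WangTile Lbl} (h : MetallicJunction n t) {i j : ℤ}
    (hi : 1 ≤ i) (hi' : i ≤ n) (hj : 1 ≤ j) (hj' : j ≤ n) :
    ImageStep n t ⟨(1, 1, i + 1), (1, 1, j + 1), (1, 1, i), (1, 1, j)⟩ := by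
  obtain ⟨k, l, r, s, h1, h2, h3, h4, h5, h6, h7, h8, rfl⟩ := h
  refine ⟨i.toNat, ?_, j.toNat, ?_, ?_⟩
  · simp only [tauLength, junctionTile]
    omega
  · simp only [tauLength, junctionTile]
    omega
  · have hi0 : i.toNat ≠ 0 := by omega
    have hj0 : j.toNat ≠ 0 := by omega
    simp only [block, blockEdge, tauLetter, junctionTile, hi0, hj0, Nat.add_eq_zero_iff,
      one_ne_zero, and_false, if_false, WangTile.mk.injEq, Prod.mk.injEq, true_and,
      Nat.cast_add, Nat.cast_one]
    split_ifs <;> omega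

theorem imageStep_white_junction (hn : 1 ≤ n) :
    ImageStep n ⟨(1, 1, 1 + 1), (1, 1, 1 + 1), (1, 1, 1), (1, 1, 1)⟩
      (junctionTile n 1 1 1 1) := by
  refine ⟨0, ?_, 0, ?_, ?_⟩
  · simp only [tauLength]
    omega
  · simp only [tauLength]
    omega
  · simp [block, blockEdge, tauLetter, junctionTile, add_comm]

theorem imageStep_junction_junction {k l r s : ℤ} (hn : 1 ≤ n) (hk : 0 ≤ k) (hr : 0 ≤ r) :
    ImageStep n (junctionTile n k l r s) (junctionTile n 0 (1 - l) 0 (1 - s)) := by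
  refine ⟨0, ?_, 0, ?_, ?_⟩
  · simp only [tauLength, junctionTile]
    omega
  · simp only [tauLength, junctionTile]
    omega
  · simp only [block, blockEdge, tauLetter, junctionTile, if_true, zero_add, one_ne_zero,
      if_false, WangTile.mk.injEq, Prod.mk.injEq, true_and, Nat.cast_one]
    split_ifs <;> omega

theorem imageStep_junction_blue {i : ℤ} (hi : 0 ≤ i) (hi' : i < n) :
    ImageStep n (junctionTile n 1 1 1 1) ⟨(0, 0, i + 1), (1, 1, 1), (0, 0, i), (1, 1, n)⟩ := by
  refine ⟨(i + 1).toNat, ?_, 0, ?_, ?_⟩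
  · simp only [tauLength, junctionTile]
    omega
  · simp only [tauLength, junctionTile]
    omega
  · have hi0 : (i + 1).toNat ≠ 0 := by omega
    simp only [block, blockEdge, tauLetter, junctionTile, hi0, if_true, zero_add, one_ne_zero,
      if_false, Nat.add_eq_zero_iff, and_false, WangTile.mk.injEq, Prod.mk.injEq, true_and,
      Nat.cast_add, Nat.cast_one]
    split_ifs <;> omega

theorem imageStep_junction_green (hn : 1 ≤ n) :
    ImageStep n (junctionTile n 0 0 0 0)
      ⟨(0, 1, n + 1), (1, 1, 1), (0, 0, n), (1, 1, n + 1)⟩ := by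
  refine ⟨n.toNat, ?_, 0, ?_, ?_⟩
  · simp only [tauLength, junctionTile]
    omega
  · simp only [tauLength, junctionTile]
    omega
  · have hn0 : n.toNat ≠ 0 := by omega
    simp only [block, blockEdge, tauLetter, junctionTile, hn0, if_true, zero_add, one_ne_zero,
      if_false, Nat.add_eq_zero_iff, and_false, WangTile.mk.injEq, Prod.mk.injEq, true_and,
      Nat.cast_add, Nat.cast_one]
    split_ifs <;> omega

theorem imageStep_blue_yellow {i : ℤ} (hi : 1 ≤ i) (hi' : i ≤ n) :
    ImageStep n ⟨(0, 0, 0 + 1), (1, 1, 1), (0, 0, 0), (1, 1, n)⟩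
      (hatT ⟨(0, 1, i + 1), (1, 1, 2), (0, 1, i), (1, 1, n + 1)⟩) := by
  refine ⟨0, ?_, i.toNat, ?_, ?_⟩
  · simp only [tauLength]
    omega
  · simp only [tauLength]
    omega
  · have hi0 : i.toNat ≠ 0 := by omega
    simp only [block, blockEdge, tauLetter, hatT, hi0, if_true, zero_add, one_ne_zero,
      if_false, Nat.add_eq_zero_iff, and_false, WangTile.mk.injEq, Prod.mk.injEq, true_and,
      Nat.cast_add, Nat.cast_one]
    split_ifs <;> omega

theorem imageStep_yellow_green {i : ℤ} (hi : 0 ≤ i) (hi' : i < n) :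
    ImageStep n ⟨(0, 1, i + 1 + 1), (1, 1, 2), (0, 1, i + 1), (1, 1, n + 1)⟩
      (hatT ⟨(0, 1, i + 1), (1, 1, 1), (0, 0, i), (1, 1, n + 1)⟩) := by
  refine ⟨0, ?_, (i + 1).toNat, ?_, ?_⟩
  · simp only [tauLength]
    omega
  · simp only [tauLength]
    omega
  · have hi0 : (i + 1).toNat ≠ 0 := by omega
    simp only [block, blockEdge, tauLetter, hatT, hi0, if_true, zero_add, one_ne_zero,
      if_false, Nat.add_eq_zero_iff, and_false, WangTile.mk.injEq, Prod.mk.injEq, true_and,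
      Nat.cast_add, Nat.cast_one]
    split_ifs <;> omega

theorem imageStep_yellow_junction (hn : 1 ≤ n) :
    ImageStep n ⟨(0, 1, 1 + 1), (1, 1, 2), (0, 1, 1), (1, 1, n + 1)⟩
      (junctionTile n 0 1 0 0) := by
  refine ⟨0, ?_, 0, ?_, ?_⟩
  · simp only [tauLength]
    omega
  · simp only [tauLength]
    omega
  · simp only [block, blockEdge, tauLetter, junctionTile, if_true, zero_add, one_ne_zero,
      if_false, WangTile.mk.injEq, Prod.mk.injEq, true_and, Nat.cast_one]
    split_ifs <;> omega

theorem imageStep_green_junction (hn : 1 ≤ n) :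
    ImageStep n ⟨(0, 1, 0 + 1), (1, 1, 1), (0, 0, 0), (1, 1, n + 1)⟩
      (junctionTile n 0 1 1 1) := by
  refine ⟨0, ?_, 0, ?_, ?_⟩
  · simp only [tauLength]
    omega
  · simp only [tauLength]
    omega
  · simp only [block, blockEdge, tauLetter, junctionTile, if_true, zero_add, one_ne_zero,
      if_false, WangTile.mk.injEq, Prod.mk.injEq, true_and, Nat.cast_one]
    split_ifs <;> omega

theorem metallicJunction_junctionTile_zero : MetallicJunction n (junctionTile n 0 0 0 0) :=
  ⟨0, 0, 0, 0, by omega, by omega, by omega, by omega, by omega, by omega, by omega, by omega, rfl⟩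

theorem MetallicJunction.walk_junctionTile_zero {t : WangTile Lbl} (hn : 1 ≤ n)
    (h : MetallicJunction n t) : ImageWalk n 3 t (junctionTile n 0 0 0 0) :=
  ((h.imageStep_white le_rfl hn le_rfl hn).walk.step (imageStep_white_junction hn)).step
    (imageStep_junction_junction hn zero_le_one zero_le_one)

theorem imageWalk_junctionTile_zero_of_mem {a : WangTile Lbl} (hn : 1 ≤ n) (ha : a ∈ Tmet n) :
    ImageWalk n 4 a (junctionTile n 0 0 0 0) :=
  (imageStep_corner hn ha).walk.trans
    ((metallicJunction_block hn ha).walk_junctionTile_zero hn)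

theorem imageWalk_junctionTile_zero_self (hn : 1 ≤ n) (k : ℕ) :
    ImageWalk n (k + 2) (junctionTile n 0 0 0 0) (junctionTile n 0 0 0 0) := by
  have h2 : ImageWalk n 2 (junctionTile n 0 0 0 0) (junctionTile n 0 0 0 0) :=
    (imageStep_junction_junction hn le_rfl le_rfl).walk.step
      (imageStep_junction_junction hn le_rfl le_rfl)
  induction k using Nat.twoStepInduction with
  | zero => exact h2
  | one => exact metallicJunction_junctionTile_zero.walk_junctionTile_zero hn
  | more k ih _ => exact ih.trans h2

/-- The tile `b` occurs in the image of the junction tile `j^{0,0,0,0}` under some power of `ω_n`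
of exponent at most six. -/
def ReachedFromJunction (n : ℤ) (b : WangTile Lbl) : Prop :=
  ∃ m ≤ 6, ImageWalk n m (junctionTile n 0 0 0 0) b

theorem ReachedFromJunction.hatT {b : WangTile Lbl} (h : ReachedFromJunction n b) :
    ReachedFromJunction n (hatT b) := by
  obtain ⟨m, hm, h⟩ := h
  exact ⟨m, hm, h.hatT⟩

theorem imageWalk_junction_one (hn : 1 ≤ n) :
    ImageWalk n 2 (junctionTile n 0 0 0 0) (junctionTile n 1 1 1 1) :=
  (metallicJunction_junctionTile_zero.imageStep_white le_rfl hn le_rfl hn).walk.step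
    (imageStep_white_junction hn)

theorem imageWalk_blue {i : ℤ} (hi : 0 ≤ i) (hi' : i < n) :
    ImageWalk n 3 (junctionTile n 0 0 0 0) ⟨(0, 0, i + 1), (1, 1, 1), (0, 0, i), (1, 1, n)⟩ :=
  (imageWalk_junction_one (by omega)).step (imageStep_junction_blue hi hi')

theorem imageWalk_yellow {i : ℤ} (hi : 1 ≤ i) (hi' : i ≤ n) :
    ImageWalk n 4 (junctionTile n 0 0 0 0)
      ⟨(0, 1, i + 1), (1, 1, 2), (0, 1, i), (1, 1, n + 1)⟩ :=
  ((imageWalk_blue le_rfl (by omega)).step (imageStep_blue_yellow hi hi')).hatT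

theorem imageWalk_green {i : ℤ} (hi : 0 ≤ i) (hi' : i < n) :
    ImageWalk n 5 (junctionTile n 0 0 0 0)
      ⟨(0, 1, i + 1), (1, 1, 1), (0, 0, i), (1, 1, n + 1)⟩ :=
  ((imageWalk_yellow (by omega) (by omega)).step (imageStep_yellow_green hi hi')).hatT

theorem imageWalk_junction_mixed (hn : 1 ≤ n) :
    ImageWalk n 5 (junctionTile n 0 0 0 0) (junctionTile n 0 1 0 0) :=
  (imageWalk_yellow le_rfl hn).step (imageStep_yellow_junction hn)

theorem imageWalk_junction_green (hn : 1 ≤ n) :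
    ImageWalk n 6 (junctionTile n 0 0 0 0) (junctionTile n 0 1 1 1) :=
  (imageWalk_green le_rfl (by omega)).step (imageStep_green_junction hn)

theorem HorizontalTile.reachedFromJunction {b : WangTile Lbl} (hn : 1 ≤ n)
    (h : HorizontalTile n b) : ReachedFromJunction n b := by
  obtain ⟨i, ⟨h1, h2, rfl⟩ | ⟨h1, h2, rfl⟩ | ⟨h1, h2, rfl⟩⟩ := h
  · exact ⟨3, by omega, imageWalk_blue h1 h2⟩
  · rcases h2.lt_or_eq with h2 | rfl
    · exact ⟨5, by omega, imageWalk_green h1 h2⟩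
    · exact ⟨1, by omega, (imageStep_junction_green hn).walk⟩
  · exact ⟨4, by omega, imageWalk_yellow h1 h2⟩

theorem MetallicJunction.reachedFromJunction {b : WangTile Lbl} (hn : 1 ≤ n)
    (h : MetallicJunction n b) : ReachedFromJunction n b := by
  obtain ⟨k, l, r, s, h1, h2, h3, h4, h5, h6, h7, h8, rfl⟩ := h
  have hkl : k = 0 ∧ l = 0 ∨ k = 0 ∧ l = 1 ∨ k = 1 ∧ l = 1 := by omega
  have hrs : r = 0 ∧ s = 0 ∨ r = 0 ∧ s = 1 ∨ r = 1 ∧ s = 1 := by omega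
  rcases hkl with ⟨rfl, rfl⟩ | ⟨rfl, rfl⟩ | ⟨rfl, rfl⟩ <;>
    rcases hrs with ⟨rfl, rfl⟩ | ⟨rfl, rfl⟩ | ⟨rfl, rfl⟩
  · exact ⟨0, by omega, rfl⟩
  · exact ⟨5, by omega, (imageWalk_junction_mixed hn).hatT⟩
  · omega
  · exact ⟨5, by omega, imageWalk_junction_mixed hn⟩
  · exact ⟨1, by omega, (imageStep_junction_junction hn le_rfl le_rfl).walk⟩
  · exact ⟨6, by omega, imageWalk_junction_green hn⟩
  · omega
  · exact ⟨6, by omega, (imageWalk_junction_green hn).hatT⟩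
  · exact ⟨2, by omega, imageWalk_junction_one hn⟩

theorem reachedFromJunction_of_mem {b : WangTile Lbl} (hn : 1 ≤ n) (hb : b ∈ Tmet n) :
    ReachedFromJunction n b := by
  rcases (mem_Tmet_iff hn).1 hb with ⟨i, j, hi, hi', hj, hj', rfl⟩ | h | h | h
  · exact ⟨1, by omega,
      (metallicJunction_junctionTile_zero.imageStep_white hi hi' hj hj').walk⟩
  · exact h.reachedFromJunction hn
  · exact (h.reachedFromJunction hn).hatT
  · exact h.reachedFromJunction hn

theorem imageWalk_of_mem {a b : WangTile Lbl} (hn : 1 ≤ n) (ha : a ∈ Tmet n) (hb : b ∈ Tmet n) :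
    ImageWalk n 12 a b := by
  obtain ⟨m, hm, h⟩ := reachedFromJunction_of_mem hn hb
  have key := ((imageWalk_junctionTile_zero_of_mem hn ha).trans
    (imageWalk_junctionTile_zero_self hn (6 - m))).trans h
  rwa [show 4 + (6 - m + 2) + m = 12 by omega] at key

end Walk

section Iteration

theorem exists_block_index {A : ℕ → ℕ} (hA : StrictMono A) (h0 : A 0 = 0) :
    ∃ f : ℕ → ℕ, (∀ x, A (f x) ≤ x ∧ x < A (f x + 1)) ∧
      ∀ k i, A k + i < A (k + 1) → f (A k + i) = k := by
  have hf : ∀ x, ∃ k, A k ≤ x ∧ x < A (k + 1) := by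
    intro x
    refine ⟨Nat.findGreatest (fun k => A k ≤ x) x, ?_, ?_⟩
    · exact Nat.findGreatest_spec (P := fun k => A k ≤ x) (Nat.zero_le x) (by simp [h0])
    · by_contra! hlt
      have := hA.le_apply.trans hlt
      have := Nat.le_findGreatest (P := fun k => A k ≤ x) this hlt
      omega
  choose f hf using hf
  refine ⟨f, hf, fun k i hi => ?_⟩
  have h1 := hA.lt_iff_lt.1 ((hf (A k + i)).1.trans_lt hi)
  have h2 := hA.lt_iff_lt.1 ((Nat.le_add_right _ i).trans_lt (hf (A k + i)).2)
  omega

theorem exists_block_boundaries {w : ℕ} {W : ℕ → ℕ} (hW : ∀ k < w, 0 < W k) :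
    ∃ A : ℕ → ℕ, StrictMono A ∧ A 0 = 0 ∧ ∀ k < w, A (k + 1) = A k + W k := by
  refine ⟨fun k => ∑ i ∈ Finset.range k, if i < w then W i else 1, ?_, ?_, ?_⟩
  · refine strictMono_nat_of_lt_succ fun k => ?_
    rw [Finset.sum_range_succ]
    split_ifs with hk
    · have := hW k hk
      omega
    · omega
  · simp
  · intro k hk
    simp only [Finset.sum_range_succ, if_pos hk]

variable {n : ℤ}

theorem ValidPattern.tauLength_bottom {w h : ℕ} {p : ℕ → ℕ → WangTile Lbl} (hn : 1 ≤ n)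
    (hp : ValidPattern (Tmet n) w h p) {k l : ℕ} (hk : k < w) (hl : l < h) :
    tauLength n (p k l).bottom = tauLength n (p k 0).bottom := by
  induction l with
  | zero => rfl
  | succ l ih =>
    rw [← hp.2.2 k l hk hl, tauLength_top hn (hp.1 k l hk (by omega)), ih (by omega)]

theorem ValidPattern.tauLength_left {w h : ℕ} {p : ℕ → ℕ → WangTile Lbl} (hn : 1 ≤ n)
    (hp : ValidPattern (Tmet n) w h p) {k l : ℕ} (hk : k < w) (hl : l < h) :
    tauLength n (p k l).left = tauLength n (p 0 l).left := by
  induction k with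
  | zero => rfl
  | succ k ih =>
    rw [← hp.2.1 k l hk hl, tauLength_right hn (hp.1 k l (by omega) hl), ih (by omega)]

theorem ValidPattern.exists_image {w h : ℕ} {p : ℕ → ℕ → WangTile Lbl} (hn : 1 ≤ n)
    (hw : 0 < w) (hh : 0 < h) (hp : ValidPattern (Tmet n) w h p) :
    ∃ (w' h' : ℕ) (q : ℕ → ℕ → WangTile Lbl), 0 < w' ∧ 0 < h' ∧
      ValidPattern (Tmet n) w' h' q ∧ IsPatternImage n (Tmet n) w h p w' h' q ∧
      ∀ k < w, ∀ l < h, ∀ b, ImageStep n (p k l) b → ∃ i < w', ∃ j < h', q i j = b := by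
  obtain ⟨A, hA, hA0, hAs⟩ := exists_block_boundaries (w := w)
    (W := fun k => tauLength n (p k 0).bottom)
    (fun k hk => tauLength_pos hn (bottom_mem_Vn hn (hp.1 k 0 hk hh)))
  obtain ⟨B, hB, hB0, hBs⟩ := exists_block_boundaries (w := h)
    (W := fun l => tauLength n (p 0 l).left)
    (fun l hl => tauLength_pos hn (left_mem_Vn hn (hp.1 0 l hw hl)))
  obtain ⟨f, hf, hfA⟩ := exists_block_index hA hA0
  obtain ⟨g, hg, hgB⟩ := exists_block_index hB hB0
  have hA' : ∀ k < w, ∀ l < h, A (k + 1) = A k + tauLength n (p k l).bottom := by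
    intro k hk l hl
    rw [hAs k hk, hp.tauLength_bottom hn hk hl]
  have hB' : ∀ k < w, ∀ l < h, B (l + 1) = B l + tauLength n (p k l).left := by
    intro k hk l hl
    rw [hBs l hl, hp.tauLength_left hn hk hl]
  have hlt : ∀ {x}, x < A w → f x < w := fun hx => hA.lt_iff_lt.1 ((hf _).1.trans_lt hx)
  have hlt' : ∀ {y}, y < B h → g y < h := fun hy => hB.lt_iff_lt.1 ((hg _).1.trans_lt hy)
  set q : ℕ → ℕ → WangTile Lbl := fun x y => block n (p (f x) (g y)) (x - A (f x)) (y - B (g y))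
    with hq
  have hqb : ∀ k < w, ∀ l < h, ∀ i < tauLength n (p k l).bottom,
      ∀ j < tauLength n (p k l).left, q (A k + i) (B l + j) = block n (p k l) i j := by
    intro k hk l hl i hi j hj
    have h1 := hA' k hk l hl
    have h2 := hB' k hk l hl
    simp only [hq, hfA k i (by omega), hgB l j (by omega), Nat.add_sub_cancel_left]
  have hcoord : ∀ x < A w, ∀ y < B h, ∃ k < w, ∃ l < h,
      ∃ i < tauLength n (p k l).bottom, ∃ j < tauLength n (p k l).left,
        x = A k + i ∧ y = B l + j := by
    intro x hx y hy
    have h1 := hf x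
    have h2 := hg y
    have h3 := hA' _ (hlt hx) _ (hlt' hy)
    have h4 := hB' _ (hlt hx) _ (hlt' hy)
    exact ⟨f x, hlt hx, g y, hlt' hy, x - A (f x), by omega, y - B (g y), by omega, by omega,
      by omega⟩
  have hqv : ValidPattern (Tmet n) (A w) (B h) q := by
    refine ⟨?_, ?_, ?_⟩
    · intro x y hx hy
      obtain ⟨k, hk, l, hl, i, hi, j, hj, rfl, rfl⟩ := hcoord x hx y hy
      rw [hqb k hk l hl i hi j hj]
      exact block_mem_Tmet hn (hp.1 k l hk hl) hi hj
    · intro x y hx hy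
      obtain ⟨k, hk, l, hl, i, hi, j, hj, rfl, rfl⟩ := hcoord x (by omega) y hy
      rw [hqb k hk l hl i hi j hj]
      by_cases hi' : i + 1 < tauLength n (p k l).bottom
      · rw [add_assoc, hqb k hk l hl (i + 1) hi' j hj]
        rfl
      · obtain rfl : i = tauLength n (p k l).bottom - 1 := by omega
        have h1 := hA' k hk l hl
        have h2 : A k + (tauLength n (p k l).bottom - 1) + 1 = A (k + 1) + 0 := by omega
        rw [h2] at hx ⊢
        have hk' : k + 1 < w := hA.lt_iff_lt.1 hx
        have h3 := hp.2.1 k l hk' hl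
        rw [block_right hn (hp.1 k l hk hl) hj, hqb (k + 1) hk' l hl 0
          (tauLength_pos hn (bottom_mem_Vn hn (hp.1 _ _ hk' hl))) j
          (by rwa [← h3, tauLength_right hn (hp.1 k l hk hl)]), block_left, h3]
    · intro x y hx hy
      obtain ⟨k, hk, l, hl, i, hi, j, hj, rfl, rfl⟩ := hcoord x hx y (by omega)
      rw [hqb k hk l hl i hi j hj]
      by_cases hj' : j + 1 < tauLength n (p k l).left
      · rw [add_assoc, hqb k hk l hl i hi (j + 1) hj']
        rfl
      · obtain rfl : j = tauLength n (p k l).left - 1 := by omega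
        have h1 := hB' k hk l hl
        have h2 : B l + (tauLength n (p k l).left - 1) + 1 = B (l + 1) + 0 := by omega
        rw [h2] at hy ⊢
        have hl' : l + 1 < h := hB.lt_iff_lt.1 hy
        have h3 := hp.2.2 k l hk hl'
        rw [block_top hn (hp.1 k l hk hl) hi, hqb k hk (l + 1) hl' i
          (by rwa [← h3, tauLength_top hn (hp.1 k l hk hl)]) 0
          (tauLength_pos hn (left_mem_Vn hn (hp.1 _ _ hk hl'))), block_bottom, h3]
  refine ⟨A w, B h, q, ?_, ?_, hqv, ?_, ?_⟩
  · exact hA0 ▸ hA hw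
  · exact hB0 ▸ hB hh
  · refine ⟨A, B, hA0, hB0, rfl, rfl, fun k _ => hA k.lt_succ_self,
      fun k _ => hB k.lt_succ_self, ?_⟩
    intro k l hk hl
    have ht := hp.1 k l hk hl
    have h1 := hA' k hk l hl
    have h2 := hB' k hk l hl
    have h3 : A (k + 1) - A k = tauLength n (p k l).bottom := by omega
    have h4 : B (l + 1) - B l = tauLength n (p k l).left := by omega
    have h5 : A (k + 1) ≤ A w := hA.monotone hk
    have h6 : B (l + 1) ≤ B h := hB.monotone hl
    have h7 := tauLength_pos hn (bottom_mem_Vn hn ht)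
    have h8 := tauLength_pos hn (left_mem_Vn hn ht)
    rw [h3, h4]
    refine ⟨⟨?_, ?_, ?_⟩, ?_, ?_, ?_, ?_⟩
    · exact fun i j hi hj => hqv.1 _ _ (by omega) (by omega)
    · exact fun i j hi hj => hqv.2.1 (A k + i) _ (by omega) (by omega)
    · exact fun i j hi hj => hqv.2.2 _ (B l + j) (by omega) (by omega)
    · rw [tau_eq_map hn (right_mem_Vn hn ht), tauLength_right hn ht, rightWord]
      refine List.map_congr_left fun j hj => ?_
      rw [List.mem_range] at hj
      rw [hqb k hk l hl _ (by omega) j hj, block_right hn ht hj]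
    · rw [tau_eq_map hn (top_mem_Vn hn ht), tauLength_top hn ht, topWord]
      refine List.map_congr_left fun i hi => ?_
      rw [List.mem_range] at hi
      rw [hqb k hk l hl i hi _ (by omega), block_top hn ht hi]
    · rw [tau_eq_map hn (left_mem_Vn hn ht), leftWord]
      refine List.map_congr_left fun j hj => ?_
      rw [List.mem_range] at hj
      rw [hqb k hk l hl 0 h7 j hj, block_left]
    · rw [tau_eq_map hn (bottom_mem_Vn hn ht), bottomWord]
      refine List.map_congr_left fun i hi => ?_
      rw [List.mem_range] at hi
      rw [hqb k hk l hl i hi 0 h8, block_bottom]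
  · rintro k hk l hl b ⟨i, hi, j, hj, rfl⟩
    have h1 := hA' k hk l hl
    have h2 := hB' k hk l hl
    have h5 : A (k + 1) ≤ A w := hA.monotone hk
    have h6 : B (l + 1) ≤ B h := hB.monotone hl
    exact ⟨A k + i, by omega, B l + j, by omega, hqb k hk l hl i hi j hj⟩

theorem exists_iterImage {a : WangTile Lbl} (hn : 1 ≤ n) (ha : a ∈ Tmet n) (m : ℕ) :
    ∃ (w h : ℕ) (q : ℕ → ℕ → WangTile Lbl), 0 < w ∧ 0 < h ∧ ValidPattern (Tmet n) w h q ∧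
      IterImage n (Tmet n) m a w h q ∧
      ∀ b, ImageWalk n m a b → ∃ i < w, ∃ j < h, q i j = b := by
  induction m with
  | zero =>
    refine ⟨1, 1, fun _ _ => a, one_pos, one_pos, ⟨fun _ _ _ _ => ha, ?_, ?_⟩, ⟨rfl, rfl, rfl⟩, ?_⟩
    · intro i j hi
      omega
    · intro i j _ hj
      omega
    · exact fun b hb => ⟨0, one_pos, 0, one_pos, hb⟩
  | succ m ih =>
    obtain ⟨w, h, p, hw, hh, hp, hit, hocc⟩ := ih
    obtain ⟨w', h', q, hw', hh', hq, him, hocc'⟩ := hp.exists_image hn hw hh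
    refine ⟨w', h', q, hw', hh', hq, ⟨w, h, p, hit, him⟩, ?_⟩
    rintro b ⟨c, hc, hcb⟩
    obtain ⟨k, hk, l, hl, rfl⟩ := hocc c hc
    exact hocc' k hk l hl b hcb

end Iteration

/-- the substitution `ω_n` is primitive. -/
theorem stmt17 (n : ℤ) (hn : 1 ≤ n) :
    ∃ m : ℕ, ∀ a ∈ Tmet n, ∀ b ∈ Tmet n,
      ∃ (w h : ℕ) (q : ℕ → ℕ → WangTile Lbl),
        IterImage n (Tmet n) m a w h q ∧ ∃ i < w, ∃ j < h, q i j = b := by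
  refine ⟨12, fun a ha b hb => ?_⟩
  obtain ⟨w, h, q, -, -, -, hit, hocc⟩ := exists_iterImage hn ha 12
  exact ⟨w, h, q, hit, hocc b (imageWalk_of_mem hn ha hb)⟩
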